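/- Let G ⊆ UT(n,ℝ) and H ⊆ UT(n',ℝ) be real unipotent groups and let f : G → H be a surjective group homomorphism that is a polynomial map (each matrix entry of f(g) is a real polynomial in the matrix entries of g); let f^♯ : G^♯ → H^♯ denote its nonstandard extension (obtained by applying f along representing sequences, equivalently by evaluating the same polynomials over ℝ*). Let 𝒳 ⊆ G^♯ be an arbitrary subset and let Γ be a lattice in G such that f(Γ) is closed in H. Then f^♯(st(𝒳·Γ^♯)) = st(f^♯(𝒳)·f^♯(Γ^♯)), where for a subset 𝒜 of G^♯ (resp. H^♯), st(𝒜) denotes the set of standard parts st(a) of all elements a ∈ 𝒜 whose entries are all finite. -/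

import Mathlib

open Pointwise Filter

noncomputable section

/-- Square matrices of size `n` over `R`. -/
abbrev Mat (n : ℕ) (R : Type) : Type := Matrix (Fin n) (Fin n) R

/-- The set `UT(n,ℝ)` of upper triangular matrices with `1`s on the diagonal. -/
def UTset (n : ℕ) : Set (Mat n ℝ) :=
  {A | (∀ i, A i i = 1) ∧ ∀ i j : Fin n, (j : ℕ) < (i : ℕ) → A i j = 0}

/-- The entries of a matrix, as a point of `ℝ^(n²)`. -/
def matEval {n : ℕ} (A : Mat n ℝ) : Fin n × Fin n → ℝ := fun ij => A ij.1 ij.2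

/-- A real unipotent group: a subgroup of `UT(n,ℝ)` which is the common zero set in
`UT(n,ℝ)` of a family of real polynomials in the matrix entries. -/
def IsRealUnipotentGroup (n : ℕ) (G : Set (Mat n ℝ)) : Prop :=
  (∃ S : Set (MvPolynomial (Fin n × Fin n) ℝ),
      G = {A | A ∈ UTset n ∧ ∀ p ∈ S, MvPolynomial.eval (matEval A) p = 0}) ∧
    (1 : Mat n ℝ) ∈ G ∧ (∀ a ∈ G, ∀ b ∈ G, a * b ∈ G) ∧ ∀ a ∈ G, a⁻¹ ∈ G

/-- A real algebraic subgroup of a real unipotent group `G`. -/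
def IsRealAlgSubgroup (n : ℕ) (G H : Set (Mat n ℝ)) : Prop :=
  H ⊆ G ∧ IsRealUnipotentGroup n H

/-- `N` is a normal subgroup-set of `G`. -/
def IsNormalIn (n : ℕ) (G N : Set (Mat n ℝ)) : Prop :=
  ∀ g ∈ G, ∀ x ∈ N, g * x * g⁻¹ ∈ N

/-- `Γ` is a lattice in `G`: a discrete subgroup which is cocompact, i.e. there is a
compact `K ⊆ G` with `K·Γ = G` (equivalently, `G/Γ` is compact). -/
def IsLatticeIn (n : ℕ) (G Γ : Set (Mat n ℝ)) : Prop :=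
  Γ ⊆ G ∧ (1 : Mat n ℝ) ∈ Γ ∧ (∀ a ∈ Γ, ∀ b ∈ Γ, a * b ∈ Γ) ∧ (∀ a ∈ Γ, a⁻¹ ∈ Γ) ∧
    DiscreteTopology ↥Γ ∧
    ∃ K : Set (Mat n ℝ), K ⊆ G ∧ IsCompact K ∧ ∀ g ∈ G, ∃ k ∈ K, ∃ γ ∈ Γ, g = k * γ

/-- `H` is `Γ`-rational: `Γ ∩ H` is a lattice in `H`. -/
def IsRationalFor (n : ℕ) (Γ H : Set (Mat n ℝ)) : Prop :=
  IsLatticeIn n H (Γ ∩ H)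

/-- The hyperreal matrix represented by a sequence of real matrices. -/
def matOfSeq (n : ℕ) (u : ℕ → Mat n ℝ) : Mat n Hyperreal :=
  Matrix.of fun i j => Hyperreal.ofSeq fun k => u k i j

/-- The nonstandard extension `S^♯` of a set `S` of real matrices: hyperreal matrices
represented by sequences landing in `S` on a set of indices in the ultrafilter. -/
def matSharp (n : ℕ) (S : Set (Mat n ℝ)) : Set (Mat n Hyperreal) :=
  {A | ∃ u : ℕ → Mat n ℝ, (∀ᶠ k in hyperfilter ℕ, u k ∈ S) ∧ A = matOfSeq n u}

/-- The canonical embedding of real matrices into hyperreal matrices. -/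
def matCast {n : ℕ} (A : Mat n ℝ) : Mat n Hyperreal :=
  Matrix.of fun i j => (A i j : Hyperreal)

/-- `μ(G)`: elements of `G^♯` all of whose entries are infinitesimally close to the
corresponding entries of the identity matrix. -/
def muSet (n : ℕ) (G : Set (Mat n ℝ)) : Set (Mat n Hyperreal) :=
  {A | A ∈ matSharp n G ∧ ∀ i j, Hyperreal.Infinitesimal (A i j - (1 : Mat n Hyperreal) i j)}

/-- The coset `gH` is near `α`, i.e. `α ∈ μ(G)·g·H^♯`. -/
def NearCoset (n : ℕ) (G : Set (Mat n ℝ)) (g : Mat n ℝ) (H : Set (Mat n ℝ))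
    (α : Mat n Hyperreal) : Prop :=
  α ∈ muSet n G * ({matCast g} * matSharp n H)

/-- The set of standard parts of the finite elements of a set of hyperreal matrices. -/
def matStSet (n : ℕ) (A : Set (Mat n Hyperreal)) : Set (Mat n ℝ) :=
  {B | ∃ a ∈ A, ∀ i j, Hyperreal.IsSt (a i j) (B i j)}

/-- A polynomial map `ℝ^d → Mat n ℝ`. -/
def IsPolyMapVec (d n : ℕ) (F : (Fin d → ℝ) → Mat n ℝ) : Prop :=
  ∃ P : Fin n → Fin n → MvPolynomial (Fin d) ℝ,
    ∀ x i j, F x i j = MvPolynomial.eval x (P i j)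

/-- The inclusion `ℝ →+* ℝ*` as a ring homomorphism. -/
def realHyperRingHom : ℝ →+* Hyperreal where
  toFun r := (r : Hyperreal)
  map_one' := Hyperreal.coe_one
  map_mul' := Hyperreal.coe_mul
  map_zero' := Hyperreal.coe_zero
  map_add' := Hyperreal.coe_add

/-- A semialgebraic subset of matrix space: a finite union of sets defined by finitely
many polynomial equations and finitely many strict polynomial inequalities. -/
def IsSemialgebraic (n : ℕ) (S : Set (Mat n ℝ)) : Prop :=
  ∃ (k : ℕ) (P Q : Fin k → Finset (MvPolynomial (Fin n × Fin n) ℝ)),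
    S = ⋃ t : Fin k, {A | (∀ p ∈ P t, MvPolynomial.eval (matEval A) p = 0) ∧
      ∀ q ∈ Q t, 0 < MvPolynomial.eval (matEval A) q}


/-- The quotient map from sequences to hyperreals, as a ring homomorphism. -/
def seqRingHom : (ℕ → ℝ) →+* Hyperreal where
  toFun u := Hyperreal.ofSeq u
  map_one' := rfl
  map_mul' _ _ := rfl
  map_zero' := rfl
  map_add' _ _ := rfl

lemma matOfSeq_mul' (n : ℕ) (u v : ℕ → Mat n ℝ) :
    matOfSeq n u * matOfSeq n v = matOfSeq n fun k => u k * v k := by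
  ext i j
  rw [Matrix.mul_apply]
  change ∑ l, seqRingHom (fun k => u k i l) * seqRingHom (fun k => v k l j) =
    seqRingHom (fun k => (u k * v k) i j)
  simp_rw [← map_mul]
  rw [← map_sum]
  congr 1
  funext k
  simp [Matrix.mul_apply]

lemma matOfSeq_congr' (n : ℕ) (u v : ℕ → Mat n ℝ)
    (h : ∀ᶠ k in hyperfilter ℕ, u k = v k) : matOfSeq n u = matOfSeq n v := by
  ext i j
  change Hyperreal.ofSeq _ = Hyperreal.ofSeq _
  refine Filter.Germ.coe_eq.2 ?_
  filter_upwards [h] with k hk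
  rw [hk]

lemma matOfSeq_isSt (n : ℕ) (u : ℕ → Mat n ℝ) (B : Mat n ℝ) :
    (∀ i j, Hyperreal.IsSt (matOfSeq n u i j) (B i j)) ↔
      Tendsto u (hyperfilter ℕ) (nhds B) := by
  refine Iff.trans ?_ tendsto_pi_nhds.symm
  refine forall_congr' fun i => ?_
  refine Iff.trans ?_ tendsto_pi_nhds.symm
  refine forall_congr' fun j => ?_
  exact Hyperreal.isSt_ofSeq_iff_tendsto

lemma continuous_matEval_poly {n : ℕ} (p : MvPolynomial (Fin n × Fin n) ℝ) :
    Continuous fun A : Mat n ℝ => MvPolynomial.eval (matEval A) p := by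
  refine (MvPolynomial.continuous_eval p).comp ?_
  unfold matEval
  fun_prop

lemma unip_det {n : ℕ} {G : Set (Mat n ℝ)} (hG : IsRealUnipotentGroup n G)
    {A : Mat n ℝ} (hA : A ∈ G) : A.det = 1 := by
  obtain ⟨⟨S, rfl⟩, -⟩ := hG
  rw [Matrix.det_of_upperTriangular]
  · simp [hA.1.1]
  · intro i j hij
    exact hA.1.2 i j hij

lemma unip_closed {n : ℕ} {G : Set (Mat n ℝ)} (hG : IsRealUnipotentGroup n G) :
    IsClosed G := by
  obtain ⟨⟨S, rfl⟩, -⟩ := hG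
  unfold UTset
  simp only [Set.mem_setOf_eq, Set.setOf_and, Set.setOf_forall]
  refine ((isClosed_iInter fun i => ?_).inter (isClosed_iInter fun i => isClosed_iInter fun j =>
    isClosed_iInter fun _ => ?_)).inter (isClosed_iInter fun p => isClosed_iInter fun _ => ?_)
  · exact isClosed_eq (by fun_prop) continuous_const
  · exact isClosed_eq (by fun_prop) continuous_const
  · exact isClosed_eq (continuous_matEval_poly p) continuous_const

/-- for a surjective polynomial homomorphism `f : G → H` with `f(Γ)`
closed, `f(st(𝒳·Γ^♯)) = st(f^♯(𝒳)·f^♯(Γ^♯))`. -/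
theorem stmt16 {n n' : ℕ} (G : Set (Mat n ℝ)) (H : Set (Mat n' ℝ))
    (hG : IsRealUnipotentGroup n G) (hH : IsRealUnipotentGroup n' H)
    (f : Mat n ℝ → Mat n' ℝ)
    (hpoly : ∃ P : Fin n' → Fin n' → MvPolynomial (Fin n × Fin n) ℝ,
      ∀ g ∈ G, ∀ i j, f g i j = MvPolynomial.eval (matEval g) (P i j))
    (hhom : ∀ a ∈ G, ∀ b ∈ G, f (a * b) = f a * f b)
    (hsurj : f '' G = H)
    (fs : Mat n Hyperreal → Mat n' Hyperreal)
    (hfs : ∀ u : ℕ → Mat n ℝ, fs (matOfSeq n u) = matOfSeq n' fun k => f (u k))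
    (𝒳 : Set (Mat n Hyperreal)) (h𝒳 : 𝒳 ⊆ matSharp n G)
    (Γ : Set (Mat n ℝ)) (hΓ : IsLatticeIn n G Γ) (hΓclosed : IsClosed (f '' Γ)) :
    f '' matStSet n (𝒳 * matSharp n Γ) =
      matStSet n' ((fs '' 𝒳) * (fs '' matSharp n Γ)) := by
  have hcont : ∀ (w : ℕ → Mat n ℝ) (B : Mat n ℝ), B ∈ G → (∀ᶠ k in hyperfilter ℕ, w k ∈ G) →
      Tendsto w (hyperfilter ℕ) (nhds B) →
      Tendsto (fun k => f (w k)) (hyperfilter ℕ) (nhds (f B)) := by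
    intro w B hB hw hlim
    obtain ⟨P, hP⟩ := hpoly
    refine tendsto_pi_nhds.2 fun i => tendsto_pi_nhds.2 fun j => ?_
    rw [hP B hB]
    refine (((continuous_matEval_poly (P i j)).tendsto B).comp hlim).congr' ?_
    filter_upwards [hw] with k hk
    exact (hP _ hk i j).symm
  obtain ⟨hΓG, h1, hmul, hinv, -, K, hKG, hK, hKΓ⟩ := hΓ
  have hGmul := hG.2.2.1
  ext h
  constructor
  · rintro ⟨g, ⟨a, ha, hst⟩, rfl⟩
    obtain ⟨x, hx, y, hy, rfl⟩ := Set.mem_mul.1 ha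
    obtain ⟨u, hu, rfl⟩ := h𝒳 hx
    have hy' := hy
    obtain ⟨v, hv, rfl⟩ := hy'
    rw [matOfSeq_mul', matOfSeq_isSt] at hst
    have huv : ∀ᶠ k in hyperfilter ℕ, u k * v k ∈ G := by
      filter_upwards [hu, hv] with k h1 h2
      exact hGmul _ h1 _ (hΓG h2)
    have hg : g ∈ G := (unip_closed hG).mem_of_tendsto hst huv
    refine ⟨_, Set.mul_mem_mul ⟨_, hx, rfl⟩ ⟨_, hy, rfl⟩, ?_⟩
    rw [hfs, hfs, matOfSeq_mul', matOfSeq_isSt]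
    refine (hcont _ _ hg huv hst).congr' ?_
    filter_upwards [hu, hv] with k h1 h2
    exact hhom _ h1 _ (hΓG h2)
  · rintro ⟨a, ha, hst⟩
    obtain ⟨_, ⟨x, hx, rfl⟩, _, ⟨y, hy, rfl⟩, rfl⟩ := Set.mem_mul.1 ha
    obtain ⟨u, hu, rfl⟩ := h𝒳 hx
    obtain ⟨v, hv, rfl⟩ := hy
    rw [hfs, hfs, matOfSeq_mul', matOfSeq_isSt] at hst
    have hex : ∀ k, ∃ c γ : Mat n ℝ, (u k ∈ G ∧ v k ∈ Γ) →
        c ∈ K ∧ γ ∈ Γ ∧ u k * v k = c * γ := by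
      intro k
      by_cases hk : u k ∈ G ∧ v k ∈ Γ
      · obtain ⟨c, hc, γ, hγ, e⟩ := hKΓ _ (hGmul _ hk.1 _ (hΓG hk.2))
        exact ⟨c, γ, fun _ => ⟨hc, hγ, e⟩⟩
      · exact ⟨1, 1, fun h => absurd h hk⟩
    choose c γ hcγ using hex
    have hev : ∀ᶠ k in hyperfilter ℕ, c k ∈ K ∧ γ k ∈ Γ ∧ u k * v k = c k * γ k := by
      filter_upwards [hu, hv] with k h1 h2
      exact hcγ k ⟨h1, h2⟩
    obtain ⟨c0, hc0, hlim⟩ := hK.ultrafilter_le_nhds ((hyperfilter ℕ).map c) (by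
      rw [Ultrafilter.coe_map, le_principal_iff, mem_map]
      filter_upwards [hev] with k hk using hk.1)
    have hlim : Tendsto c (hyperfilter ℕ) (nhds c0) := hlim
    have hc0G := hKG hc0
    have hfc := hcont c c0 hc0G (hev.mono fun k hk => hKG hk.1) hlim
    have hadj : Tendsto (fun k => (f (c k)).adjugate * (f (u k) * f (v k))) (hyperfilter ℕ)
        (nhds ((f c0).adjugate * h)) :=
      ((((continuous_id.matrix_adjugate).tendsto (f c0)).comp hfc)).mul hst
    have hfdet : ∀ g ∈ G, (f g).det = 1 := fun g hg =>
      unip_det hH (hsurj ▸ Set.mem_image_of_mem f hg)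
    have hmem : (f c0).adjugate * h ∈ f '' Γ := by
      refine hΓclosed.mem_of_tendsto hadj ?_
      filter_upwards [hu, hv, hev] with k h1 h2 h3
      refine ⟨γ k, h3.2.1, ?_⟩
      rw [← hhom _ h1 _ (hΓG h2), h3.2.2, hhom _ (hKG h3.1) _ (hΓG h3.2.1), ← mul_assoc,
        Matrix.adjugate_mul, hfdet _ (hKG h3.1), one_smul, one_mul]
    obtain ⟨γ0, hγ0, hfγ0⟩ := hmem
    refine ⟨c0 * γ0, ⟨matOfSeq n u * matOfSeq n (fun k => v k * ((γ k)⁻¹ * γ0)),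
      Set.mul_mem_mul hx ⟨_, ?_, rfl⟩, ?_⟩, ?_⟩
    · filter_upwards [hv, hev] with k h2 h3
      exact hmul _ h2 _ (hmul _ (hinv _ h3.2.1) _ hγ0)
    · rw [matOfSeq_mul', matOfSeq_isSt]
      refine (hlim.mul_const γ0).congr' ?_
      filter_upwards [hev] with k h3
      have hd : IsUnit (γ k).det := by
        rw [unip_det hG (hΓG h3.2.1)]; exact isUnit_one
      rw [← mul_assoc, h3.2.2, ← mul_assoc, mul_assoc (c k), Matrix.mul_nonsing_inv _ hd, mul_one]
    · rw [hhom _ hc0G _ (hΓG hγ0), hfγ0, ← mul_assoc, Matrix.mul_adjugate, hfdet _ hc0G,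
        one_smul, one_mul]
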